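/- arXiv:2502.05412 — 2 statements merged into one kernel-verified Lean document; each statement's English description precedes it below -/
import Mathlib

section
/- Let v be a norm on ℝ^n invariant under coordinate permutations, let γ : (a,b) → P_n be a curve that is differentiable at a point t₀ ∈ (a,b) (as a matrix-valued function). Then the metric derivative of γ at t₀ with respect to d_v exists and lim_{s→t₀} d_v(γ(s), γ(t₀)) / |s − t₀| = ‖γ(t₀)^{-1/2} γ'(t₀) γ(t₀)^{-1/2}‖_v. -/
noncomputable section
open scoped Classical
open Matrix Filter
open scoped ComplexOrder Topology

attribute [local instance] Matrix.normedAddCommGroup Matrix.normedSpace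

/-- `v(λ(H))` for Hermitian `H` (junk value `0` otherwise). -/
def vnorm {n : ℕ} (v : (Fin n → ℝ) → ℝ) (H : Matrix (Fin n) (Fin n) ℂ) : ℝ :=
  if h : H.IsHermitian then v h.eigenvalues else 0

/-- The positive semidefinite square root (junk value `0` off PSD matrices). -/
def matSqrt {n : ℕ} (X : Matrix (Fin n) (Fin n) ℂ) : Matrix (Fin n) (Fin n) ℂ :=
  if h : X.PosSemidef then
    (h.1.eigenvectorUnitary : Matrix (Fin n) (Fin n) ℂ) *
      Matrix.diagonal ((↑) ∘ Real.sqrt ∘ h.1.eigenvalues) *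
      (star h.1.eigenvectorUnitary : Matrix (Fin n) (Fin n) ℂ)
  else 0

/-- The Hermitian logarithm of a positive definite matrix, via the spectral
decomposition (junk value `0` off Hermitian matrices). -/
def mlog {n : ℕ} (X : Matrix (Fin n) (Fin n) ℂ) : Matrix (Fin n) (Fin n) ℂ :=
  if h : X.IsHermitian then
    (h.eigenvectorUnitary : Matrix (Fin n) (Fin n) ℂ) *
      Matrix.diagonal (fun i => (Real.log (h.eigenvalues i) : ℂ)) *
      (star h.eigenvectorUnitary : Matrix (Fin n) (Fin n) ℂ)
  else 0

/-- The invariant Finsler distance `d_v(X,Y) = ‖log (X^{-1/2} Y X^{-1/2})‖_v`. -/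
def dv {n : ℕ} (v : (Fin n → ℝ) → ℝ) (X Y : Matrix (Fin n) (Fin n) ℂ) : ℝ :=
  vnorm v (mlog ((matSqrt X)⁻¹ * Y * (matSqrt X)⁻¹))

lemma exists_perm_of_map_eq {n : ℕ} (f g : Fin n → ℝ)
    (h : Multiset.map f Finset.univ.val = Multiset.map g Finset.univ.val) :
    ∃ σ : Equiv.Perm (Fin n), f = g ∘ σ := by
  have hl : List.Perm (List.ofFn f) (List.ofFn g) := by
    simpa [Fin.univ_val_map, Multiset.coe_eq_coe] using h
  have key : f ∘ Tuple.sort f = g ∘ Tuple.sort g := by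
    apply List.ofFn_injective
    apply List.Perm.eq_of_pairwise (le := (· ≤ ·))
    · intro a b _ _ h1 h2; exact le_antisymm h1 h2
    · exact (Tuple.monotone_sort f).sortedLE_ofFn.pairwise
    · exact (Tuple.monotone_sort g).sortedLE_ofFn.pairwise
    · exact ((Equiv.Perm.ofFn_comp_perm _ f).trans hl).trans
        (Equiv.Perm.ofFn_comp_perm _ g).symm
  refine ⟨(Tuple.sort f).symm.trans (Tuple.sort g), ?_⟩
  funext i
  have := congrFun key ((Tuple.sort f).symm i)
  simpa using this

lemma eig_perm {n : ℕ} {H : Matrix (Fin n) (Fin n) ℂ} (hH : H.IsHermitian) (d : Fin n → ℝ)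
    (h : H.charpoly = (Matrix.diagonal (fun i => (d i : ℂ))).charpoly) :
    ∃ σ : Equiv.Perm (Fin n), hH.eigenvalues = d ∘ σ := by
  apply exists_perm_of_map_eq
  have h1 := hH.roots_charpoly_eq_eigenvalues
  rw [h, Matrix.charpoly_diagonal, Polynomial.roots_prod] at h1
  · have h2 := congrArg (Multiset.map Complex.re) h1
    simpa [Multiset.map_map, Function.comp_def] using h2.symm
  · simp [Finset.prod_ne_zero_iff, Polynomial.X_sub_C_ne_zero]

lemma charpoly_conj {n : ℕ} (U V E : Matrix (Fin n) (Fin n) ℂ) (h : V * U = 1) :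
    (U * E * V).charpoly = E.charpoly := by
  rw [Matrix.charpoly_mul_comm, ← mul_assoc, h, one_mul]

lemma herm_conj {n : ℕ} (U : Matrix (Fin n) (Fin n) ℂ) (d : Fin n → ℝ) :
    (U * Matrix.diagonal (fun i => (d i : ℂ)) * star U).IsHermitian := by
  have : (Matrix.diagonal (fun i => (d i : ℂ))).IsHermitian := by
    rw [Matrix.isHermitian_diagonal_iff]
    intro i
    simp [IsSelfAdjoint]
  exact Matrix.isHermitian_mul_mul_conjTranspose U this

lemma vnorm_eq {n : ℕ} (v : (Fin n → ℝ) → ℝ)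
    (hv_perm : ∀ (σ : Equiv.Perm (Fin n)) (x : Fin n → ℝ), v (x ∘ σ) = v x)
    (U : Matrix (Fin n) (Fin n) ℂ) (hU : star U * U = 1) (d : Fin n → ℝ)
    {H : Matrix (Fin n) (Fin n) ℂ}
    (hH : H = U * Matrix.diagonal (fun i => (d i : ℂ)) * star U) :
    vnorm v H = v d := by
  subst hH
  obtain ⟨σ, hσ⟩ := eig_perm (herm_conj U d) d (charpoly_conj _ _ _ hU)
  rw [vnorm, dif_pos (herm_conj U d), hσ, hv_perm]

lemma vnorm_mlog {n : ℕ} (v : (Fin n → ℝ) → ℝ)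
    (hv_perm : ∀ (σ : Equiv.Perm (Fin n)) (x : Fin n → ℝ), v (x ∘ σ) = v x)
    (d : Fin n → ℝ) {H : Matrix (Fin n) (Fin n) ℂ} (hH : H.IsHermitian)
    (h : H.charpoly = (Matrix.diagonal (fun i => (d i : ℂ))).charpoly) :
    vnorm v (mlog H) = v (fun i => Real.log (d i)) := by
  obtain ⟨σ, hσ⟩ := eig_perm hH d h
  rw [vnorm_eq v hv_perm (hH.eigenvectorUnitary : Matrix (Fin n) (Fin n) ℂ)
    (Unitary.coe_star_mul_self _) (fun i => Real.log (hH.eigenvalues i))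
    (by rw [mlog, dif_pos hH]), hσ]
  exact hv_perm σ (fun i => Real.log (d i))

lemma matSqrt_herm {n : ℕ} {X : Matrix (Fin n) (Fin n) ℂ} (hX : X.PosDef) :
    (matSqrt X).IsHermitian := by
  rw [matSqrt, dif_pos hX.posSemidef]
  exact herm_conj _ (fun i => Real.sqrt (hX.1.eigenvalues i))

lemma spectral' {n : ℕ} {X : Matrix (Fin n) (Fin n) ℂ} (hX : X.IsHermitian) :
    X = (hX.eigenvectorUnitary : Matrix (Fin n) (Fin n) ℂ) *
      Matrix.diagonal (fun i => (hX.eigenvalues i : ℂ)) *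
      star (hX.eigenvectorUnitary : Matrix (Fin n) (Fin n) ℂ) := by
  conv_lhs => rw [hX.spectral_theorem, Unitary.conjStarAlgAut_apply]
  rfl

lemma matSqrt_sq {n : ℕ} {X : Matrix (Fin n) (Fin n) ℂ} (hX : X.PosDef) :
    matSqrt X * matSqrt X = X := by
  conv_rhs => rw [spectral' hX.1]
  rw [matSqrt, dif_pos hX.posSemidef]
  set U := (hX.1.eigenvectorUnitary : Matrix (Fin n) (Fin n) ℂ) with hUdef
  have hU : star U * U = 1 := Unitary.coe_star_mul_self _
  set E : Matrix (Fin n) (Fin n) ℂ := Matrix.diagonal ((↑) ∘ Real.sqrt ∘ hX.1.eigenvalues) with hE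
  have hEE : E * E = Matrix.diagonal (fun i => (hX.1.eigenvalues i : ℂ)) := by
    rw [hE, Matrix.diagonal_mul_diagonal]
    congr 1
    funext i
    simp only [Function.comp]
    rw [← Complex.ofReal_mul, Real.mul_self_sqrt (hX.eigenvalues_pos i).le]
  change U * E * star U * (U * E * star U) = _
  rw [← hEE]
  calc U * E * star U * (U * E * star U) = U * E * (star U * U) * E * star U := by noncomm_ring
    _ = _ := by rw [hU]; noncomm_ring

lemma matSqrt_unit {n : ℕ} {X : Matrix (Fin n) (Fin n) ℂ} (hX : X.PosDef) :
    IsUnit (matSqrt X).det := by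
  have h := (Matrix.isUnit_iff_isUnit_det _).1 hX.isUnit
  rw [← matSqrt_sq hX, Matrix.det_mul] at h
  exact isUnit_of_mul_isUnit_left h

/-- The eigenvalues of the conjugated matrix compute the distance. -/
lemma dv_eq {n : ℕ} (v : (Fin n → ℝ) → ℝ)
    (hv_smul : ∀ (c : ℝ) (x : Fin n → ℝ), v (c • x) = |c| * v x)
    (hv_perm : ∀ (σ : Equiv.Perm (Fin n)) (x : Fin n → ℝ), v (x ∘ σ) = v x)
    {X A : Matrix (Fin n) (Fin n) ℂ} (hX : X.PosDef) (hA : A.PosDef) :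
    ∃ (U : Matrix (Fin n) (Fin n) ℂ) (k : Fin n → ℝ), U ∈ Matrix.unitaryGroup (Fin n) ℂ ∧
      (matSqrt A)⁻¹ * X * (matSqrt A)⁻¹ =
        U * Matrix.diagonal (fun i => (k i : ℂ)) * star U ∧
      dv v X A = v (fun i => Real.log (k i)) := by
  set S := matSqrt A with hS
  set R := matSqrt X with hR
  have hSS : S * S = A := matSqrt_sq hA
  have hRR : R * R = X := matSqrt_sq hX
  have hSu := matSqrt_unit hA
  have hRu := matSqrt_unit hX
  have hSh : S⁻¹.IsHermitian := (matSqrt_herm hA).inv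
  have hRh : R⁻¹.IsHermitian := (matSqrt_herm hX).inv
  have hK : (S⁻¹ * X * S⁻¹).PosDef := by
    have := hX.conjTranspose_mul_mul_same (B := S⁻¹)
      (Matrix.mulVec_injective_of_isUnit ((Matrix.isUnit_iff_isUnit_det _).2
        (Matrix.isUnit_nonsing_inv_det _ hSu)))
    rwa [hSh.eq] at this
  have hM : (R⁻¹ * A * R⁻¹).IsHermitian := by
    have := Matrix.isHermitian_conjTranspose_mul_mul (R⁻¹) hA.1
    rwa [hRh.eq] at this
  set U := (hK.1.eigenvectorUnitary : Matrix (Fin n) (Fin n) ℂ) with hUdef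
  have hU : star U * U = 1 := Unitary.coe_star_mul_self _
  have hU' : U * star U = 1 := Unitary.coe_mul_star_self _
  refine ⟨U, hK.1.eigenvalues, hK.1.eigenvectorUnitary.2, spectral' hK.1, ?_⟩
  have hinv : (S⁻¹ * X * S⁻¹)⁻¹ =
      U * Matrix.diagonal (fun i => (((hK.1.eigenvalues i)⁻¹ : ℝ) : ℂ)) * star U := by
    apply Matrix.inv_eq_right_inv
    refine (congrArg (· * (U * Matrix.diagonal (fun i => (((hK.1.eigenvalues i)⁻¹ : ℝ) : ℂ)) *
      star U)) (spectral' hK.1)).trans ?_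
    have hD : Matrix.diagonal (fun i => (hK.1.eigenvalues i : ℂ)) *
        Matrix.diagonal (fun i => (((hK.1.eigenvalues i)⁻¹ : ℝ) : ℂ)) = 1 := by
      rw [Matrix.diagonal_mul_diagonal, ← Matrix.diagonal_one]
      congr 1
      funext i
      rw [← Complex.ofReal_mul, mul_inv_cancel₀ (hK.eigenvalues_pos i).ne']
      simp
    change U * Matrix.diagonal (fun i => (hK.1.eigenvalues i : ℂ)) * star U *
      (U * Matrix.diagonal (fun i => (((hK.1.eigenvalues i)⁻¹ : ℝ) : ℂ)) * star U) = 1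
    generalize Matrix.diagonal (fun i => (hK.1.eigenvalues i : ℂ)) = E at *
    generalize Matrix.diagonal (fun i => (((hK.1.eigenvalues i)⁻¹ : ℝ) : ℂ)) = F at *
    calc U * E * star U * (U * F * star U) = U * (E * ((star U * U) * F)) * star U := by
          noncomm_ring
      _ = 1 := by rw [hU, one_mul, hD, mul_one, hU']
  have hchar : (R⁻¹ * A * R⁻¹).charpoly =
      (Matrix.diagonal (fun i => (((hK.1.eigenvalues i)⁻¹ : ℝ) : ℂ))).charpoly := by
    refine Eq.trans ?_ (charpoly_conj U (star U) _ hU)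
    rw [← hinv]
    have e1 : R⁻¹ * A * R⁻¹ = (R⁻¹ * S) * (S * R⁻¹) := by rw [← hSS]; noncomm_ring
    have e2 : (S * R⁻¹) * (R⁻¹ * S) = (S⁻¹ * X * S⁻¹)⁻¹ := by
      rw [Matrix.mul_inv_rev, Matrix.mul_inv_rev, Matrix.nonsing_inv_nonsing_inv _ hSu, ← hRR,
        Matrix.mul_inv_rev]
      noncomm_ring
    rw [e1, Matrix.charpoly_mul_comm, e2]
  rw [dv, vnorm_mlog v hv_perm _ hM hchar]
  have := hv_smul (-1) (fun i => Real.log (hK.1.eigenvalues i))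
  rw [abs_neg, abs_one, one_mul] at this
  rw [← this]
  congr 1
  funext i
  simp [Real.log_inv]

lemma v_cont {n : ℕ} (v : (Fin n → ℝ) → ℝ)
    (hv_smul : ∀ (c : ℝ) (x : Fin n → ℝ), v (c • x) = |c| * v x)
    (hv_add : ∀ x y, v (x + y) ≤ v x + v y) : Continuous v := by
  let p : Seminorm ℝ (Fin n → ℝ) := Seminorm.of v hv_add (fun c x => by
    rw [hv_smul, Real.norm_eq_abs])
  exact p.convexOn.locallyLipschitz.continuous

lemma tendsto_log_div {ι : Type*} (l : Filter ι) (h d : ι → ℝ) (c : ℝ)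
    (h0 : Tendsto h l (𝓝 0)) (hne : ∀ᶠ s in l, h s ≠ 0) (hd : Tendsto d l (𝓝 c)) :
    Tendsto (fun s => Real.log (1 + h s * d s) / h s) l (𝓝 c) := by
  have hc : ContinuousAt (dslope Real.log 1) 1 :=
    continuousAt_dslope_same.2 (Real.differentiableAt_log one_ne_zero)
  have h1 : Tendsto (fun s => 1 + h s * d s) l (𝓝 1) := by
    simpa using (h0.mul hd).const_add 1
  have h2 := (hc.tendsto.comp h1).mul hd
  simp only [dslope_same, Real.deriv_log, inv_one, one_mul] at h2
  refine h2.congr' ?_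
  filter_upwards [hne] with s hs
  have := sub_smul_dslope Real.log 1 (1 + h s * d s)
  simp only [Real.log_one, sub_zero, add_sub_cancel_left, smul_eq_mul] at this
  rw [← this]
  simp only [Function.comp]
  field_simp

lemma conj_limit {ι : Type*} {n : ℕ} (l : Filter ι) (U : ι → Matrix (Fin n) (Fin n) ℂ)
    (W : Matrix (Fin n) (Fin n) ℂ) (hW : ∀ i j, Tendsto (fun s => U s i j) l (𝓝 (W i j)))
    (T : Matrix (Fin n) (Fin n) ℂ) (Q : ι → Matrix (Fin n) (Fin n) ℂ)
    (D : Matrix (Fin n) (Fin n) ℂ) (hQ : ∀ i j, Tendsto (fun s => Q s i j) l (𝓝 (D i j)))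
    (i j : Fin n) :
    Tendsto (fun s => (star (U s) * (T * Q s * T) * U s) i j) l
      (𝓝 ((star W * (T * D * T) * W) i j)) := by
  simp only [Matrix.mul_apply, Matrix.star_apply]
  refine tendsto_finsetSum _ fun x _ => Tendsto.mul (tendsto_finsetSum _ fun y _ =>
    Tendsto.mul (hW _ _).star (tendsto_finsetSum _ fun z _ => Tendsto.mul
      (tendsto_finsetSum _ fun w _ => tendsto_const_nhds.mul (hQ _ _)) tendsto_const_nhds)) (hW _ _)

lemma unitary_limit {ι : Type*} {n : ℕ} (l : Filter ι) [l.NeBot]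
    (U : ι → Matrix (Fin n) (Fin n) ℂ)
    (W : Matrix (Fin n) (Fin n) ℂ) (hW : ∀ i j, Tendsto (fun s => U s i j) l (𝓝 (W i j)))
    (hU : ∀ᶠ s in l, U s ∈ Matrix.unitaryGroup (Fin n) ℂ) :
    W ∈ Matrix.unitaryGroup (Fin n) ℂ := by
  rw [Matrix.mem_unitaryGroup_iff]
  ext i j
  have h1 : Tendsto (fun s => (U s * star (U s)) i j) l (𝓝 ((W * star W) i j)) := by
    simp only [Matrix.mul_apply, Matrix.star_apply]
    exact tendsto_finsetSum _ fun x _ => (hW _ _).mul (hW _ _).star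
  refine tendsto_nhds_unique h1 (tendsto_const_nhds.congr' ?_)
  filter_upwards [hU] with s hs
  rw [Matrix.mem_unitaryGroup_iff.1 hs]

/-- The metric derivative w.r.t. `d_v` of a differentiable curve `γ` in `P_n` at `t₀`
exists and equals `‖γ(t₀)^{-1/2} γ'(t₀) γ(t₀)^{-1/2}‖_v`. -/
theorem metric_derivative_dv {n : ℕ} (v : (Fin n → ℝ) → ℝ)
    (hv_eq0 : ∀ x, v x = 0 ↔ x = 0)
    (hv_smul : ∀ (c : ℝ) (x : Fin n → ℝ), v (c • x) = |c| * v x)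
    (hv_add : ∀ x y, v (x + y) ≤ v x + v y)
    (hv_perm : ∀ (σ : Equiv.Perm (Fin n)) (x : Fin n → ℝ), v (x ∘ σ) = v x)
    (a b t₀ : ℝ) (ht₀ : t₀ ∈ Set.Ioo a b)
    (γ : ℝ → Matrix (Fin n) (Fin n) ℂ)
    (hγ : ∀ t ∈ Set.Ioo a b, (γ t).PosDef)
    (D : Matrix (Fin n) (Fin n) ℂ) (hD : HasDerivAt γ D t₀) :
    Tendsto (fun s => dv v (γ s) (γ t₀) / |s - t₀|) (𝓝[≠] t₀)
      (𝓝 (vnorm v ((matSqrt (γ t₀))⁻¹ * D * (matSqrt (γ t₀))⁻¹))) := by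
  have hA : (γ t₀).PosDef := hγ t₀ ht₀
  have hex : ∀ s, ∃ (U : Matrix (Fin n) (Fin n) ℂ) (k : Fin n → ℝ), s ∈ Set.Ioo a b →
      (U ∈ Matrix.unitaryGroup (Fin n) ℂ ∧
      (matSqrt (γ t₀))⁻¹ * γ s * (matSqrt (γ t₀))⁻¹ =
        U * Matrix.diagonal (fun i => (k i : ℂ)) * star U ∧
      dv v (γ s) (γ t₀) = v (fun i => Real.log (k i))) := by
    intro s
    by_cases hs : s ∈ Set.Ioo a b
    · obtain ⟨U, k, h⟩ := dv_eq v hv_smul hv_perm (hγ s hs) hA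
      exact ⟨U, k, fun _ => h⟩
    · exact ⟨0, 0, fun h => absurd h hs⟩
  choose U k hUk using hex
  set S := matSqrt (γ t₀) with hS
  have hSu : IsUnit S.det := matSqrt_unit hA
  have hSS : S * S = γ t₀ := matSqrt_sq hA
  have hone : S⁻¹ * γ t₀ * S⁻¹ = 1 := by
    rw [← hSS, ← mul_assoc, Matrix.nonsing_inv_mul _ hSu, one_mul, Matrix.mul_nonsing_inv _ hSu]
  have hslope : ∀ i j, Tendsto (fun s => (slope γ t₀ s) i j) (𝓝[≠] t₀) (𝓝 (D i j)) := by
    intro i j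
    have h1 := hasDerivAt_iff_tendsto_slope.1 hD
    exact (tendsto_pi_nhds.1 ((tendsto_pi_nhds.1 h1) i)) j
  have hmem : ∀ᶠ s in 𝓝[≠] t₀, s ∈ Set.Ioo a b :=
    eventually_nhdsWithin_of_eventually_nhds (isOpen_Ioo.mem_nhds ht₀)
  have hne : ∀ᶠ s in 𝓝[≠] t₀, s - t₀ ≠ 0 := by
    filter_upwards [self_mem_nhdsWithin] with s hs
    exact sub_ne_zero.2 hs
  have hzero : Tendsto (fun s => s - t₀) (𝓝[≠] t₀) (𝓝 0) := by
    have : Tendsto (fun s => s - t₀) (𝓝 t₀) (𝓝 (t₀ - t₀)) :=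
      (continuous_id.sub continuous_const).tendsto t₀
    rw [sub_self] at this
    exact this.mono_left nhdsWithin_le_nhds
  rw [tendsto_iff_ultrafilter]
  intro g hg
  have hWex : ∀ i j, ∃ w : ℂ, Tendsto (fun s => U s i j) (g : Filter ℝ) (𝓝 w) := by
    intro i j
    obtain ⟨w, _, hw⟩ := (isCompact_closedBall (0 : ℂ) 1).ultrafilter_le_nhds'
      (g.map (fun s => U s i j)) (by
        change ∀ᶠ s in (g : Filter ℝ), U s i j ∈ Metric.closedBall (0 : ℂ) 1
        filter_upwards [hg hmem] with s hs
        simpa using entry_norm_bound_of_unitary (hUk s hs).1 i j)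
    exact ⟨w, hw⟩
  choose W hW using hWex
  set W' : Matrix (Fin n) (Fin n) ℂ := Matrix.of W with hW'
  have hUW := unitary_limit (g : Filter ℝ) U W' hW (by
    filter_upwards [hg hmem] with s hs
    exact (hUk s hs).1)
  have hdiag : ∀ s, s ∈ Set.Ioo a b → s - t₀ ≠ 0 →
      star (U s) * (S⁻¹ * slope γ t₀ s * S⁻¹) * U s =
        Matrix.diagonal (fun i => (((k s i - 1) / (s - t₀) : ℝ) : ℂ)) := by
    intro s hs hs0
    obtain ⟨h1, h2, -⟩ := hUk s hs
    have hU1 : star (U s) * U s = 1 := Unitary.star_mul_self_of_mem h1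
    have e1 : S⁻¹ * slope γ t₀ s * S⁻¹ = (s - t₀)⁻¹ •
        (U s * Matrix.diagonal (fun i => (k s i : ℂ)) * star (U s) - 1) := by
      rw [slope_def_module, Matrix.mul_smul, Matrix.smul_mul, Matrix.mul_sub, Matrix.sub_mul,
        h2, hone]
    rw [e1, Matrix.mul_smul, Matrix.smul_mul]
    have e2 : star (U s) * (U s * Matrix.diagonal (fun i => (k s i : ℂ)) * star (U s) - 1) * U s
        = Matrix.diagonal (fun i => (k s i : ℂ)) - 1 := by
      generalize Matrix.diagonal (fun i => (k s i : ℂ)) = E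
      calc star (U s) * (U s * E * star (U s) - 1) * U s
          = (star (U s) * U s) * E * (star (U s) * U s) - star (U s) * U s := by noncomm_ring
        _ = E - 1 := by rw [hU1]; simp
    rw [e2]
    ext i j
    by_cases hij : i = j
    · subst hij
      simp [div_eq_inv_mul]
    · simp [hij]
  set B := star W' * (S⁻¹ * D * S⁻¹) * W' with hB
  have hlimB : ∀ i j, Tendsto (fun s => (star (U s) * (S⁻¹ * slope γ t₀ s * S⁻¹) * U s) i j)
      (g : Filter ℝ) (𝓝 (B i j)) :=
    conj_limit (g : Filter ℝ) U W' hW S⁻¹ (fun s => slope γ t₀ s) D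
      (fun i j => (hslope i j).mono_left hg)
  have hev : ∀ᶠ s in (g : Filter ℝ), star (U s) * (S⁻¹ * slope γ t₀ s * S⁻¹) * U s =
        Matrix.diagonal (fun i => (((k s i - 1) / (s - t₀) : ℝ) : ℂ)) := by
    filter_upwards [hg hmem, hg hne] with s h1 h2
    exact hdiag s h1 h2
  have hd : ∀ i, Tendsto (fun s => (k s i - 1) / (s - t₀)) (g : Filter ℝ) (𝓝 (B i i).re) := by
    intro i
    refine ((Complex.continuous_re.tendsto _).comp (hlimB i i)).congr' ?_
    filter_upwards [hev] with s hs
    simp only [Function.comp]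
    rw [hs, Matrix.diagonal_apply_eq, Complex.ofReal_re]
  have hBdiag : B = Matrix.diagonal (fun i => (((B i i).re : ℝ) : ℂ)) := by
    ext i j
    refine tendsto_nhds_unique (hlimB i j) ?_
    by_cases hij : i = j
    · subst hij
      rw [Matrix.diagonal_apply_eq]
      refine ((Complex.continuous_ofReal.tendsto _).comp (hd i)).congr' ?_
      filter_upwards [hev] with s hs
      rw [hs, Matrix.diagonal_apply_eq]
      rfl
    · rw [Matrix.diagonal_apply_ne _ hij]
      refine tendsto_const_nhds.congr' ?_
      filter_upwards [hev] with s hs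
      rw [hs, Matrix.diagonal_apply_ne _ hij]
  have hW1 : star W' * W' = 1 := Unitary.star_mul_self_of_mem hUW
  have hW2 : W' * star W' = 1 := Unitary.mul_star_self_of_mem hUW
  have hDB : S⁻¹ * D * S⁻¹ = W' * Matrix.diagonal (fun i => (((B i i).re : ℝ) : ℂ)) * star W' := by
    rw [← hBdiag, hB]
    generalize S⁻¹ * D * S⁻¹ = Z
    calc Z = (W' * star W') * Z * (W' * star W') := by rw [hW2]; simp
      _ = _ := by noncomm_ring
  rw [vnorm_eq v hv_perm W' hW1 _ hDB]
  have hlog : Tendsto (fun s => fun i => Real.log (k s i) / (s - t₀)) (g : Filter ℝ)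
      (𝓝 (fun i => (B i i).re)) := by
    rw [tendsto_pi_nhds]
    intro i
    refine (tendsto_log_div _ _ _ _ (hzero.mono_left hg) (hg hne) (hd i)).congr' ?_
    filter_upwards [hg hne] with s hs
    rw [mul_div_cancel₀ _ hs]
    congr 2
    ring
  refine (((v_cont v hv_smul hv_add).tendsto _).comp hlog).congr' ?_
  filter_upwards [hg hmem] with s hs
  rw [(hUk s hs).2.2]
  have := hv_smul (s - t₀)⁻¹ (fun i => Real.log (k s i))
  rw [abs_inv] at this
  rw [div_eq_inv_mul, ← this]
  simp only [Function.comp]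
  congr 1
  funext i
  simp [div_eq_inv_mul]
end
end

section
/- Let v be a norm on ℝ^n invariant under coordinate permutations with dual norm v*, and let f : P_n → ℝ be a differentiable function that is geodesically convex, i.e., t ↦ f(X^{1/2} e^{tS} X^{1/2}) is convex on ℝ for every X ∈ P_n and every Hermitian S. For X ∈ P_n let ∇f(X) denote the Hermitian matrix representing the differential of f at X, so that the derivative of f at X in direction H equals tr(∇f(X) H) for every Hermitian H. Then the global slope of f at X with respect to d_v satisfies sup_{Y ∈ P_n, Y ≠ X} max{0, f(X) − f(Y)} / d_v(X,Y) = ‖X^{1/2} ∇f(X) X^{1/2}‖_{v*}. -/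
noncomputable section
open scoped Classical
open Matrix
open scoped ComplexOrder

/-- Real diagonal matrix. -/
def dg {n : ℕ} (s : Fin n → ℝ) : Matrix (Fin n) (Fin n) ℂ :=
  Matrix.diagonal (fun i => (s i : ℂ))

lemma dg_mul {n : ℕ} (s t : Fin n → ℝ) : dg s * dg t = dg (fun i => s i * t i) := by
  simp [dg, Matrix.diagonal_mul_diagonal]

lemma dg_herm {n : ℕ} (s : Fin n → ℝ) : (dg s)ᴴ = dg s := by
  simp only [dg, Matrix.diagonal_conjTranspose]
  congr 1
  funext i
  simp

lemma dg_one {n : ℕ} : dg (fun _ : Fin n => (1 : ℝ)) = 1 := by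
  simp [dg]

lemma dg_posDef {n : ℕ} (s : Fin n → ℝ) (hs : ∀ i, 0 < s i) : (dg s).PosDef := by
  apply Matrix.PosDef.diagonal
  intro i
  simpa using hs i

lemma conj_herm {n : ℕ} (A : Matrix (Fin n) (Fin n) ℂ) (s : Fin n → ℝ) :
    (A * dg s * Aᴴ).IsHermitian := by
  simp [Matrix.IsHermitian, Matrix.conjTranspose_mul, dg_herm, Matrix.mul_assoc]

lemma conj_posDef {n : ℕ} (A : Matrix (Fin n) (Fin n) ℂ) (hA : IsUnit A) (s : Fin n → ℝ)
    (hs : ∀ i, 0 < s i) : (A * dg s * Aᴴ).PosDef := by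
  refine (dg_posDef s hs).mul_mul_conjTranspose_same ?_
  exact Matrix.vecMul_injective_iff_isUnit.mpr hA

lemma spectral {n : ℕ} {H : Matrix (Fin n) (Fin n) ℂ} (h : H.IsHermitian) :
    ∃ U : Matrix (Fin n) (Fin n) ℂ, U * Uᴴ = 1 ∧ Uᴴ * U = 1 ∧
      U = h.eigenvectorUnitary ∧ H = U * dg h.eigenvalues * Uᴴ := by
  refine ⟨h.eigenvectorUnitary, ?_, ?_, rfl, ?_⟩
  · exact Unitary.coe_mul_star_self h.eigenvectorUnitary
  · exact Unitary.coe_star_mul_self h.eigenvectorUnitary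
  · conv_lhs => rw [h.spectral_theorem, Unitary.conjStarAlgAut_apply]
    rfl

lemma matSqrt_spec {n : ℕ} {X : Matrix (Fin n) (Fin n) ℂ} (hX : X.PosDef) :
    (matSqrt X)ᴴ = matSqrt X ∧ matSqrt X * matSqrt X = X ∧ IsUnit (matSqrt X) := by
  obtain ⟨U, h1, h2, h3, h4⟩ := spectral hX.posSemidef.1
  have e : matSqrt X = U * dg (fun i => Real.sqrt (hX.posSemidef.1.eigenvalues i)) * Uᴴ := by
    rw [matSqrt, dif_pos hX.posSemidef, h3]
    rfl
  have e2 : matSqrt X * matSqrt X = X := by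
    conv_rhs => rw [h4]
    rw [e]
    calc _ = U * (dg (fun i => Real.sqrt (hX.posSemidef.1.eigenvalues i)) * (Uᴴ * U) *
              dg (fun i => Real.sqrt (hX.posSemidef.1.eigenvalues i))) * Uᴴ := by
            simp only [Matrix.mul_assoc]
      _ = _ := by
            rw [h2, Matrix.mul_one, dg_mul]
            congr 3
            funext i
            exact Real.mul_self_sqrt (hX.posSemidef.eigenvalues_nonneg i)
  refine ⟨?_, e2, ?_⟩
  · rw [e]; exact conj_herm _ _
  · have : IsUnit (matSqrt X * matSqrt X) := by rw [e2]; exact hX.isUnit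
    rw [Matrix.isUnit_iff_isUnit_det, Matrix.det_mul] at this
    rw [Matrix.isUnit_iff_isUnit_det]
    exact isUnit_of_mul_isUnit_left this

lemma exp_conj_dg {n : ℕ} (W : Matrix (Fin n) (Fin n) ℂ) (h1 : W * Wᴴ = 1)
    (s : Fin n → ℝ) (t : ℝ) :
    NormedSpace.exp (t • (W * dg s * Wᴴ)) = W * dg (fun i => Real.exp (t * s i)) * Wᴴ := by
  have hinv : W⁻¹ = Wᴴ := Matrix.inv_eq_right_inv h1
  have hu : IsUnit W := by
    rw [Matrix.isUnit_iff_isUnit_det]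
    exact Matrix.isUnit_det_of_right_inverse h1
  have e : t • (W * dg s * Wᴴ) = W * dg (fun i => t * s i) * W⁻¹ := by
    rw [hinv]
    have : dg (fun i => t * s i) = t • dg s := by
      ext i j
      by_cases hij : i = j <;> simp [dg, Matrix.diagonal, hij]
    rw [this, Matrix.mul_smul, Matrix.smul_mul]
  rw [e, Matrix.exp_conj _ _ hu, hinv]
  congr 2
  simp only [dg]
  rw [Matrix.exp_diagonal]
  congr 1
  funext i
  rw [Pi.coe_exp, ← Complex.exp_eq_exp_ℂ]
  simp

/-- convexity along curves `A diag(e^{ts}) A*` -/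
lemma conv_line {n : ℕ} (f : Matrix (Fin n) (Fin n) ℂ → ℝ)
    (hconv : ∀ X : Matrix (Fin n) (Fin n) ℂ, X.PosDef →
      ∀ S : Matrix (Fin n) (Fin n) ℂ, S.IsHermitian →
        ConvexOn ℝ Set.univ (fun t : ℝ => f (matSqrt X * NormedSpace.exp (t • S) * matSqrt X)))
    (A : Matrix (Fin n) (Fin n) ℂ) (hA : IsUnit A) (s : Fin n → ℝ) :
    ConvexOn ℝ Set.univ (fun t : ℝ => f (A * dg (fun i => Real.exp (t * s i)) * Aᴴ)) := by
  have hP : (A * Aᴴ).PosDef := by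
    have := conj_posDef A hA (fun _ => 1) (by simp)
    rwa [dg_one, Matrix.mul_one] at this
  obtain ⟨q1, q2, q3⟩ := matSqrt_spec hP
  set Q := matSqrt (A * Aᴴ) with hQ
  have hQd : IsUnit Q.det := (Matrix.isUnit_iff_isUnit_det _).mp q3
  have i1 : Q⁻¹ * Q = 1 := Matrix.nonsing_inv_mul _ hQd
  have i2 : Q * Q⁻¹ = 1 := Matrix.mul_nonsing_inv _ hQd
  have hW : (Q⁻¹ * A) * (Q⁻¹ * A)ᴴ = 1 := by
    rw [Matrix.conjTranspose_mul, Matrix.conjTranspose_nonsing_inv, q1]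
    calc _ = Q⁻¹ * (A * Aᴴ) * Q⁻¹ := by simp only [Matrix.mul_assoc]
      _ = (Q⁻¹ * Q) * (Q * Q⁻¹) := by rw [← q2]; simp only [Matrix.mul_assoc]
      _ = 1 := by rw [i1, i2, Matrix.mul_one]
  have := hconv _ hP ((Q⁻¹ * A) * dg s * (Q⁻¹ * A)ᴴ) (conj_herm _ _)
  convert this using 3 with t
  rw [exp_conj_dg _ hW, ← hQ, Matrix.conjTranspose_mul, Matrix.conjTranspose_nonsing_inv, q1]
  calc _ = (Q * Q⁻¹) * A * dg (fun i => Real.exp (t * s i)) * Aᴴ * (Q⁻¹ * Q) := by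
            rw [i1, i2, Matrix.mul_one, Matrix.one_mul]
    _ = _ := by simp only [Matrix.mul_assoc]

lemma conv_joint {n : ℕ} (f : Matrix (Fin n) (Fin n) ℂ → ℝ)
    (hconv : ∀ X : Matrix (Fin n) (Fin n) ℂ, X.PosDef →
      ∀ S : Matrix (Fin n) (Fin n) ℂ, S.IsHermitian →
        ConvexOn ℝ Set.univ (fun t : ℝ => f (matSqrt X * NormedSpace.exp (t • S) * matSqrt X)))
    (A : Matrix (Fin n) (Fin n) ℂ) (hA : IsUnit A) :
    ConvexOn ℝ Set.univ
      (fun x : Fin n → ℝ => f (A * dg (fun i => Real.exp (x i)) * Aᴴ)) := by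
  refine ⟨convex_univ, ?_⟩
  intro x _ y _ a b ha hb hab
  have hB : IsUnit (A * dg (fun i => Real.exp (x i / 2))) :=
    hA.mul (dg_posDef _ (fun i => Real.exp_pos _)).isUnit
  have key : ∀ t : ℝ, (A * dg (fun i => Real.exp (x i / 2))) *
      dg (fun i => Real.exp (t * (y i - x i))) * (A * dg (fun i => Real.exp (x i / 2)))ᴴ
      = A * dg (fun i => Real.exp (x i + t * (y i - x i))) * Aᴴ := by
    intro t
    rw [Matrix.conjTranspose_mul, dg_herm]
    calc _ = A * (dg (fun i => Real.exp (x i / 2)) * dg (fun i => Real.exp (t * (y i - x i)))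
              * dg (fun i => Real.exp (x i / 2))) * Aᴴ := by simp only [Matrix.mul_assoc]
      _ = _ := by
            rw [dg_mul, dg_mul]
            congr 3
            funext i
            rw [← Real.exp_add, ← Real.exp_add]
            congr 1
            ring
  have := (conv_line f hconv _ hB (fun i => y i - x i)).2 (Set.mem_univ 0) (Set.mem_univ 1)
    ha hb hab
  simp only [key] at this
  simp only [smul_eq_mul, mul_zero, mul_one, zero_add, zero_mul, one_mul, add_zero,
    add_sub_cancel] at this
  simp only [smul_eq_mul, Pi.add_apply, Pi.smul_apply]
  convert this using 6 with i
  obtain rfl : a = 1 - b := by linarith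
  ring_nf

/-- derivative along the geodesic -/
lemma geo_deriv {n : ℕ} (f : Matrix (Fin n) (Fin n) ℂ → ℝ)
    (hconv : ∀ X : Matrix (Fin n) (Fin n) ℂ, X.PosDef →
      ∀ S : Matrix (Fin n) (Fin n) ℂ, S.IsHermitian →
        ConvexOn ℝ Set.univ (fun t : ℝ => f (matSqrt X * NormedSpace.exp (t • S) * matSqrt X)))
    (A : Matrix (Fin n) (Fin n) ℂ) (hA : IsUnit A) (s : Fin n → ℝ) (c : ℝ)
    (hd : HasDerivAt (fun t : ℝ => f (A * Aᴴ + t • (A * dg s * Aᴴ))) c 0) :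
    HasDerivAt (fun t : ℝ => f (A * dg (fun i => Real.exp (t * s i)) * Aᴴ)) c 0 := by
  set F : (Fin n → ℝ) → ℝ := fun x => f (A * dg (fun i => Real.exp (x i)) * Aᴴ) with hF
  have hlip := (conv_joint f hconv A hA).locallyLipschitz
  obtain ⟨K, N, hN, hK⟩ := hlip 0
  let p : ℝ → Fin n → ℝ := fun t i => t * s i
  let q : ℝ → Fin n → ℝ := fun t i => Real.log (1 + t * s i)
  have hp : HasDerivAt p s 0 := by
    rw [hasDerivAt_pi]
    intro i
    simpa using (hasDerivAt_id (0 : ℝ)).mul_const (s i)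
  have hq : HasDerivAt q s 0 := by
    rw [hasDerivAt_pi]
    intro i
    have h1 : HasDerivAt (fun t : ℝ => 1 + t * s i) (s i) 0 := by
      simpa using ((hasDerivAt_id (0 : ℝ)).mul_const (s i)).const_add 1
    have := h1.log (by simp)
    simpa using this
  have hp0 : p 0 = 0 := by funext i; simp [p]
  have hq0 : q 0 = 0 := by funext i; simp [q]
  have evp : ∀ᶠ t in nhds (0 : ℝ), p t ∈ N :=
    hp.continuousAt.eventually_mem (by rwa [hp0])
  have evq : ∀ᶠ t in nhds (0 : ℝ), q t ∈ N :=
    hq.continuousAt.eventually_mem (by rwa [hq0])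
  have hpq : HasDerivAt (fun t => F (p t) - F (q t)) 0 0 := by
    have h0 := hp.sub hq
    rw [sub_self, hasDerivAt_iff_isLittleO] at h0
    rw [hasDerivAt_iff_isLittleO]
    simp only [hp0, hq0, Pi.sub_apply, sub_self, sub_zero, smul_zero] at h0 ⊢
    refine Asymptotics.IsBigO.trans_isLittleO ?_ h0
    refine Asymptotics.IsBigO.of_bound K ?_
    filter_upwards [evp, evq] with t h1 h2
    have := hK.dist_le_mul _ h1 _ h2
    rwa [dist_eq_norm, dist_eq_norm] at this
  have evpos : ∀ᶠ t in nhds (0 : ℝ), ∀ i, 0 < 1 + t * s i := by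
    rw [Filter.eventually_all]
    intro i
    have : ContinuousAt (fun t : ℝ => 1 + t * s i) 0 := by fun_prop
    exact this.eventually_const_lt (by simp)
  have hq' : HasDerivAt (fun t => F (q t)) c 0 := by
    refine hd.congr_of_eventuallyEq ?_
    filter_upwards [evpos] with t ht
    simp only [hF, q]
    congr 1
    have : dg (fun i => Real.exp (Real.log (1 + t * s i))) = 1 + t • dg s := by
      ext i j
      by_cases hij : i = j
      · subst hij
        rw [dg, Matrix.diagonal_apply_eq, Real.exp_log (ht i)]
        simp [dg]
      · simp [dg, hij]
    rw [this, Matrix.mul_add, Matrix.add_mul, Matrix.mul_one, Matrix.mul_smul, Matrix.smul_mul]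
  have := hpq.add hq'
  rw [zero_add] at this
  refine this.congr_of_eventuallyEq (Filter.Eventually.of_forall fun t => ?_)
  simp [hF, p]

section normpart
variable {n : ℕ} (v vs : (Fin n → ℝ) → ℝ)

lemma v_nonneg (hv_eq0 : ∀ x, v x = 0 ↔ x = 0)
    (hv_smul : ∀ (c : ℝ) (x : Fin n → ℝ), v (c • x) = |c| * v x)
    (hv_add : ∀ x y, v (x + y) ≤ v x + v y) (x : Fin n → ℝ) : 0 ≤ v x := by
  have h1 := hv_add x (-x)
  have h2 := hv_smul (-1) x
  simp only [neg_smul, one_smul, abs_neg, abs_one, one_mul] at h2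
  rw [add_neg_cancel, (hv_eq0 0).2 rfl, h2] at h1
  linarith

lemma v_sum (hv_eq0 : ∀ x, v x = 0 ↔ x = 0)
    (hv_add : ∀ x y, v (x + y) ≤ v x + v y) {ι : Type*} (S : Finset ι) (g : ι → Fin n → ℝ) :
    v (∑ i ∈ S, g i) ≤ ∑ i ∈ S, v (g i) := by
  induction S using Finset.induction_on with
  | empty => simp [(hv_eq0 0).2 rfl]
  | insert a S ha ih =>
    rw [Finset.sum_insert ha, Finset.sum_insert ha]
    linarith [hv_add (g a) (∑ i ∈ S, g i)]

lemma v_ds (hv_eq0 : ∀ x, v x = 0 ↔ x = 0)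
    (hv_smul : ∀ (c : ℝ) (x : Fin n → ℝ), v (c • x) = |c| * v x)
    (hv_add : ∀ x y, v (x + y) ≤ v x + v y)
    (hv_perm : ∀ (σ : Equiv.Perm (Fin n)) (x : Fin n → ℝ), v (x ∘ σ) = v x)
    (M : Matrix (Fin n) (Fin n) ℝ) (hM : M ∈ doublyStochastic ℝ (Fin n)) (x : Fin n → ℝ) :
    v (M *ᵥ x) ≤ v x := by
  obtain ⟨w, hw0, hw1, rfl⟩ := exists_eq_sum_perm_of_mem_doublyStochastic hM
  rw [Matrix.sum_mulVec]
  refine (v_sum v hv_eq0 hv_add _ _).trans ?_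
  have : ∀ σ : Equiv.Perm (Fin n), v ((w σ • σ.permMatrix ℝ) *ᵥ x) = w σ * v x := by
    intro σ
    rw [Matrix.smul_mulVec, hv_smul, abs_of_nonneg (hw0 σ), Matrix.permMatrix_mulVec, hv_perm]
  simp only [this]
  rw [← Finset.sum_mul, hw1, one_mul]

lemma vs_pair (hv_eq0 : ∀ x, v x = 0 ↔ x = 0)
    (hv_smul : ∀ (c : ℝ) (x : Fin n → ℝ), v (c • x) = |c| * v x)
    (hv_add : ∀ x y, v (x + y) ≤ v x + v y)
    (hvs : ∀ x, IsGreatest {r : ℝ | ∃ y : Fin n → ℝ, v y ≤ 1 ∧ r = ∑ i, x i * y i} (vs x))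
    (x y : Fin n → ℝ) : ∑ i, x i * y i ≤ vs x * v y := by
  by_cases hy : v y = 0
  · rw [hy, (hv_eq0 y).1 hy]; simp
  have hpos : 0 < v y := lt_of_le_of_ne (v_nonneg v hv_eq0 hv_smul hv_add y) (Ne.symm hy)
  have := (hvs x).2 ⟨(v y)⁻¹ • y, by
    rw [hv_smul, abs_of_pos (inv_pos.2 hpos), inv_mul_cancel₀ hy], rfl⟩
  have e : ∑ i, x i * ((v y)⁻¹ • y) i = (∑ i, x i * y i) / v y := by
    rw [Finset.sum_div]
    refine Finset.sum_congr rfl fun i _ => ?_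
    simp only [Pi.smul_apply, smul_eq_mul]
    field_simp
  rw [e, div_le_iff₀ hpos] at this
  exact this
end normpart

lemma unitary_ds {n : ℕ} (W : Matrix (Fin n) (Fin n) ℂ) (h1 : W * Wᴴ = 1) (h2 : Wᴴ * W = 1) :
    (Matrix.of fun i j => Complex.normSq (W i j)) ∈ doublyStochastic ℝ (Fin n) := by
  rw [mem_doublyStochastic_iff_sum]
  refine ⟨fun i j => Complex.normSq_nonneg _, fun i => ?_, fun j => ?_⟩
  · have := congrFun (congrFun h1 i) i
    simp only [Matrix.mul_apply, Matrix.conjTranspose_apply, Matrix.one_apply_eq,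
      RCLike.star_def, Complex.mul_conj] at this
    simp only [Matrix.of_apply]
    exact_mod_cast this
  · have := congrFun (congrFun h2 j) j
    simp only [Matrix.mul_apply, Matrix.conjTranspose_apply, Matrix.one_apply_eq,
      RCLike.star_def, ← Complex.normSq_eq_conj_mul_self] at this
    simp only [Matrix.of_apply]
    exact_mod_cast this

lemma trace_conj {n : ℕ} (U V : Matrix (Fin n) (Fin n) ℂ) (g s : Fin n → ℝ) :
    (Matrix.trace ((U * dg g * Uᴴ) * (V * dg s * Vᴴ))).re =
      ∑ i, g i * ((Matrix.of fun i j => Complex.normSq ((Uᴴ * V) i j)) *ᵥ s) i := by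
  have : Matrix.trace ((U * dg g * Uᴴ) * (V * dg s * Vᴴ)) =
      Matrix.trace (dg g * (Uᴴ * V) * dg s * (Uᴴ * V)ᴴ) := by
    rw [Matrix.conjTranspose_mul, Matrix.conjTranspose_conjTranspose]
    simp only [Matrix.mul_assoc]
    rw [Matrix.trace_mul_comm]
    simp only [Matrix.mul_assoc]
  rw [this]
  set W := Uᴴ * V
  simp only [Matrix.trace, Matrix.diag, Complex.re_sum]
  refine Finset.sum_congr rfl fun i _ => ?_
  rw [Matrix.mul_apply]
  simp only [dg, Matrix.mul_diagonal, Matrix.diagonal_mul, Matrix.conjTranspose_apply,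
    Matrix.mulVec, dotProduct, Matrix.of_apply, Complex.re_sum, Finset.mul_sum]
  refine Finset.sum_congr rfl fun j _ => ?_
  have : (g i : ℂ) * W i j * (s j : ℂ) * star (W i j)
      = ((g i * (Complex.normSq (W i j) * s j) : ℝ) : ℂ) := by
    push_cast
    rw [← Complex.mul_conj]
    simp only [RCLike.star_def]
    ring
  rw [this, Complex.ofReal_re]

lemma mul_unit_facts {n : ℕ} {U V : Matrix (Fin n) (Fin n) ℂ} (hU : U * Uᴴ = 1) (hV : V * Vᴴ = 1) :
    (Uᴴ * V) * (Uᴴ * V)ᴴ = 1 ∧ (Uᴴ * V)ᴴ * (Uᴴ * V) = 1 := by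
  have hU2 : Uᴴ * U = 1 := mul_eq_one_comm.1 hU
  have : (Uᴴ * V) * (Uᴴ * V)ᴴ = 1 := by
    rw [Matrix.conjTranspose_mul, Matrix.conjTranspose_conjTranspose]
    calc _ = Uᴴ * (V * Vᴴ) * U := by simp only [Matrix.mul_assoc]
      _ = 1 := by rw [hV, Matrix.mul_one, hU2]
  exact ⟨this, mul_eq_one_comm.1 this⟩

/-- functional calculus is well defined -/
lemma fc_congr {n : ℕ} {U V : Matrix (Fin n) (Fin n) ℂ} (hU : U * Uᴴ = 1) (hV : V * Vᴴ = 1)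
    {a b : Fin n → ℝ} (h : U * dg a * Uᴴ = V * dg b * Vᴴ) (g : ℝ → ℝ) :
    U * dg (fun i => g (a i)) * Uᴴ = V * dg (fun i => g (b i)) * Vᴴ := by
  have hU2 : Uᴴ * U = 1 := mul_eq_one_comm.1 hU
  have hV2 : Vᴴ * V = 1 := mul_eq_one_comm.1 hV
  have h1 : dg a * (Uᴴ * V) = (Uᴴ * V) * dg b := by
    calc _ = (Uᴴ * U) * dg a * (Uᴴ * V) := by rw [hU2, Matrix.one_mul]
      _ = Uᴴ * (U * dg a * Uᴴ) * V := by simp only [Matrix.mul_assoc]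
      _ = (Uᴴ * V) * dg b * (Vᴴ * V) := by rw [h]; simp only [Matrix.mul_assoc]
      _ = _ := by rw [hV2, Matrix.mul_one]
  have h2 : dg (fun i => g (a i)) * (Uᴴ * V) = (Uᴴ * V) * dg (fun i => g (b i)) := by
    ext i j
    have := congrFun (congrFun h1 i) j
    simp only [dg, Matrix.mul_diagonal, Matrix.diagonal_mul] at this ⊢
    by_cases hw : (Uᴴ * V) i j = 0
    · rw [hw]; simp
    · rw [mul_comm] at this
      have := mul_left_cancel₀ hw this
      have := Complex.ofReal_injective this
      rw [this, mul_comm]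
  calc _ = U * (dg (fun i => g (a i)) * (Uᴴ * V)) * Vᴴ := by
          calc _ = U * dg (fun i => g (a i)) * Uᴴ * (V * Vᴴ) := by rw [hV, Matrix.mul_one]
            _ = _ := by simp only [Matrix.mul_assoc]
    _ = (U * Uᴴ) * V * dg (fun i => g (b i)) * Vᴴ := by rw [h2]; simp only [Matrix.mul_assoc]
    _ = _ := by rw [hU, Matrix.one_mul]

lemma eig_ds {n : ℕ} {U V : Matrix (Fin n) (Fin n) ℂ} (hU : U * Uᴴ = 1) (hV : V * Vᴴ = 1)
    {a b : Fin n → ℝ} (h : U * dg a * Uᴴ = V * dg b * Vᴴ) :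
    ∃ M ∈ doublyStochastic ℝ (Fin n), a = M *ᵥ b := by
  have hU2 : Uᴴ * U = 1 := mul_eq_one_comm.1 hU
  obtain ⟨w1, w2⟩ := mul_unit_facts hU hV
  refine ⟨_, unitary_ds _ w1 w2, ?_⟩
  have h1 : dg a = (Uᴴ * V) * dg b * (Uᴴ * V)ᴴ := by
    rw [Matrix.conjTranspose_mul, Matrix.conjTranspose_conjTranspose]
    calc _ = (Uᴴ * U) * dg a * (Uᴴ * U) := by rw [hU2, Matrix.one_mul, Matrix.mul_one]
      _ = Uᴴ * (U * dg a * Uᴴ) * U := by simp only [Matrix.mul_assoc]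
      _ = _ := by rw [h]; simp only [Matrix.mul_assoc]
  funext i
  have := congrFun (congrFun h1 i) i
  rw [Matrix.mul_apply] at this
  simp only [dg, Matrix.mul_diagonal, Matrix.diagonal_apply_eq, Matrix.conjTranspose_apply] at this
  simp only [Matrix.mulVec, dotProduct, Matrix.of_apply]
  apply Complex.ofReal_injective
  rw [this]
  push_cast
  refine Finset.sum_congr rfl fun j _ => ?_
  rw [← Complex.mul_conj]
  simp only [RCLike.star_def]
  ring

lemma vnorm_conj {n : ℕ} (v : (Fin n → ℝ) → ℝ) (hv_eq0 : ∀ x, v x = 0 ↔ x = 0)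
    (hv_smul : ∀ (c : ℝ) (x : Fin n → ℝ), v (c • x) = |c| * v x)
    (hv_add : ∀ x y, v (x + y) ≤ v x + v y)
    (hv_perm : ∀ (σ : Equiv.Perm (Fin n)) (x : Fin n → ℝ), v (x ∘ σ) = v x)
    {U : Matrix (Fin n) (Fin n) ℂ} (hU : U * Uᴴ = 1) (a : Fin n → ℝ) :
    vnorm v (U * dg a * Uᴴ) = v a := by
  rw [vnorm, dif_pos (conj_herm U a)]
  obtain ⟨V, h1, h2, -, h4⟩ := spectral (conj_herm U a)
  apply le_antisymm
  · obtain ⟨M, hM, e⟩ := eig_ds h1 hU h4.symm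
    rw [e]
    exact v_ds v hv_eq0 hv_smul hv_add hv_perm M hM _
  · obtain ⟨M, hM, e⟩ := eig_ds hU h1 h4
    conv_lhs => rw [e]
    exact v_ds v hv_eq0 hv_smul hv_add hv_perm M hM _

lemma mlog_conj {n : ℕ} {U : Matrix (Fin n) (Fin n) ℂ} (hU : U * Uᴴ = 1) (a : Fin n → ℝ) :
    mlog (U * dg a * Uᴴ) = U * dg (fun i => Real.log (a i)) * Uᴴ := by
  rw [mlog, dif_pos (conj_herm U a)]
  obtain ⟨V, h1, h2, h3, h4⟩ := spectral (conj_herm U a)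
  rw [fc_congr hU h1 h4 Real.log, h3]
  rfl

lemma dv_conj {n : ℕ} (v : (Fin n → ℝ) → ℝ) (hv_eq0 : ∀ x, v x = 0 ↔ x = 0)
    (hv_smul : ∀ (c : ℝ) (x : Fin n → ℝ), v (c • x) = |c| * v x)
    (hv_add : ∀ x y, v (x + y) ≤ v x + v y)
    (hv_perm : ∀ (σ : Equiv.Perm (Fin n)) (x : Fin n → ℝ), v (x ∘ σ) = v x)
    {X U : Matrix (Fin n) (Fin n) ℂ} (hX : X.PosDef) (hU : U * Uᴴ = 1) (a : Fin n → ℝ) :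
    dv v X ((matSqrt X * U) * dg (fun i => Real.exp (a i)) * (matSqrt X * U)ᴴ) = v a := by
  obtain ⟨q1, q2, q3⟩ := matSqrt_spec hX
  have hQd : IsUnit (matSqrt X).det := (Matrix.isUnit_iff_isUnit_det _).mp q3
  have i1 : (matSqrt X)⁻¹ * matSqrt X = 1 := Matrix.nonsing_inv_mul _ hQd
  have i2 : matSqrt X * (matSqrt X)⁻¹ = 1 := Matrix.mul_nonsing_inv _ hQd
  have : (matSqrt X)⁻¹ * ((matSqrt X * U) * dg (fun i => Real.exp (a i)) * (matSqrt X * U)ᴴ)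
      * (matSqrt X)⁻¹ = U * dg (fun i => Real.exp (a i)) * Uᴴ := by
    rw [Matrix.conjTranspose_mul, q1]
    calc _ = ((matSqrt X)⁻¹ * matSqrt X) * U * dg (fun i => Real.exp (a i)) * Uᴴ *
          (matSqrt X * (matSqrt X)⁻¹) := by simp only [Matrix.mul_assoc]
      _ = _ := by rw [i1, i2, Matrix.one_mul, Matrix.mul_one]
  rw [dv, this, mlog_conj hU]
  simp only [Real.log_exp]
  exact vnorm_conj v hv_eq0 hv_smul hv_add hv_perm hU a

/-- The global slope of a differentiable geodesically convex function `f` on `P_n`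
w.r.t. `d_v` equals the dual gradient norm `‖X^{1/2} ∇f(X) X^{1/2}‖_{v*}`. -/
theorem slope_eq_dual_gradient_norm {n : ℕ} (v vs : (Fin n → ℝ) → ℝ)
    (hv_eq0 : ∀ x, v x = 0 ↔ x = 0)
    (hv_smul : ∀ (c : ℝ) (x : Fin n → ℝ), v (c • x) = |c| * v x)
    (hv_add : ∀ x y, v (x + y) ≤ v x + v y)
    (hv_perm : ∀ (σ : Equiv.Perm (Fin n)) (x : Fin n → ℝ), v (x ∘ σ) = v x)
    (hvs : ∀ x, IsGreatest {r : ℝ | ∃ y : Fin n → ℝ, v y ≤ 1 ∧ r = ∑ i, x i * y i} (vs x))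
    (f : Matrix (Fin n) (Fin n) ℂ → ℝ)
    (hconv : ∀ X : Matrix (Fin n) (Fin n) ℂ, X.PosDef →
      ∀ S : Matrix (Fin n) (Fin n) ℂ, S.IsHermitian →
        ConvexOn ℝ Set.univ (fun t : ℝ => f (matSqrt X * NormedSpace.exp (t • S) * matSqrt X)))
    (Gf : Matrix (Fin n) (Fin n) ℂ → Matrix (Fin n) (Fin n) ℂ)
    (hGf_herm : ∀ X : Matrix (Fin n) (Fin n) ℂ, X.PosDef → (Gf X).IsHermitian)
    (hGf : ∀ X : Matrix (Fin n) (Fin n) ℂ, X.PosDef →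
      ∀ H : Matrix (Fin n) (Fin n) ℂ, H.IsHermitian →
        HasDerivAt (fun t : ℝ => f (X + t • H)) ((Matrix.trace (Gf X * H)).re) 0)
    (X : Matrix (Fin n) (Fin n) ℂ) (hX : X.PosDef) :
    sSup {r : ℝ | ∃ Y : Matrix (Fin n) (Fin n) ℂ, Y.PosDef ∧ Y ≠ X ∧
        r = max 0 (f X - f Y) / dv v X Y}
      = vnorm vs (matSqrt X * Gf X * matSqrt X) := by
  obtain ⟨q1, q2, q3⟩ := matSqrt_spec hX
  set Q := matSqrt X with hQ
  have hQd : IsUnit Q.det := (Matrix.isUnit_iff_isUnit_det _).mp q3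
  have i1 : Q⁻¹ * Q = 1 := Matrix.nonsing_inv_mul _ hQd
  have i2 : Q * Q⁻¹ = 1 := Matrix.mul_nonsing_inv _ hQd
  have hGh : (Q * Gf X * Q).IsHermitian := by
    have := (hGf_herm X hX).eq
    simp [Matrix.IsHermitian, Matrix.conjTranspose_mul, q1, this, Matrix.mul_assoc]
  obtain ⟨U, u1, u2, -, u4⟩ := spectral hGh
  rw [vnorm, dif_pos hGh]
  set g := hGh.eigenvalues with hg
  have hunit : ∀ V : Matrix (Fin n) (Fin n) ℂ, V * Vᴴ = 1 → IsUnit (Q * V) := fun V hV =>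
    q3.mul ((Matrix.isUnit_iff_isUnit_det _).mpr (Matrix.isUnit_det_of_right_inverse hV))
  have hAA : ∀ V : Matrix (Fin n) (Fin n) ℂ, V * Vᴴ = 1 → (Q * V) * (Q * V)ᴴ = X := by
    intro V hV
    rw [Matrix.conjTranspose_mul, q1]
    calc _ = Q * (V * Vᴴ) * Q := by simp only [Matrix.mul_assoc]
      _ = X := by rw [hV, Matrix.mul_one, q2]
  -- derivative along geodesics
  have hder : ∀ (V : Matrix (Fin n) (Fin n) ℂ), V * Vᴴ = 1 → ∀ s : Fin n → ℝ,
      HasDerivAt (fun t : ℝ => f ((Q * V) * dg (fun i => Real.exp (t * s i)) * (Q * V)ᴴ))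
        (Matrix.trace ((U * dg g * Uᴴ) * (V * dg s * Vᴴ))).re 0 := by
    intro V hV s
    apply geo_deriv f hconv _ (hunit V hV)
    rw [hAA V hV]
    have := hGf X hX _ (conj_herm (Q * V) s)
    convert this using 2
    rw [← u4, Matrix.conjTranspose_mul, q1]
    calc Matrix.trace (Q * Gf X * Q * (V * dg s * Vᴴ))
        = Matrix.trace (Q * (Gf X * Q * (V * dg s * Vᴴ))) := by simp only [Matrix.mul_assoc]
      _ = Matrix.trace ((Gf X * Q * (V * dg s * Vᴴ)) * Q) := Matrix.trace_mul_comm _ _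
      _ = _ := by simp only [Matrix.mul_assoc]
  have hzero : ∀ (V : Matrix (Fin n) (Fin n) ℂ), V * Vᴴ = 1 → ∀ s : Fin n → ℝ,
      (Q * V) * dg (fun i => Real.exp (0 * s i)) * (Q * V)ᴴ = X := by
    intro V hV s
    simp only [zero_mul, Real.exp_zero, dg_one, Matrix.mul_one]
    exact hAA V hV
  have hvn := v_nonneg v hv_eq0 hv_smul hv_add
  have hvsn : 0 ≤ vs g := (hvs g).2 ⟨0, by rw [(hv_eq0 0).2 rfl]; exact zero_le_one, by simp⟩
  -- upper bound
  have hub : ∀ r ∈ {r : ℝ | ∃ Y : Matrix (Fin n) (Fin n) ℂ, Y.PosDef ∧ Y ≠ X ∧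
        r = max 0 (f X - f Y) / dv v X Y}, r ≤ vs g := by
    rintro r ⟨Y, hY, -, rfl⟩
    have hM : (Q⁻¹ * Y * Q⁻¹).PosDef := by
      have hQi : IsUnit Q⁻¹ := (Matrix.isUnit_nonsing_inv_iff).2 q3
      have := hY.mul_mul_conjTranspose_same (B := Q⁻¹)
        (Matrix.vecMul_injective_iff_isUnit.mpr hQi)
      rwa [Matrix.conjTranspose_nonsing_inv, q1] at this
    obtain ⟨V, v1, v2, -, v4⟩ := spectral hM.1
    set l := hM.1.eigenvalues with hl
    have hlpos : ∀ i, 0 < l i := fun i => hM.eigenvalues_pos i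
    let s : Fin n → ℝ := fun i => Real.log (l i)
    have hes : (fun i => Real.exp (s i)) = l := by
      funext i
      exact Real.exp_log (hlpos i)
    have hYe : (Q * V) * dg (fun i => Real.exp (s i)) * (Q * V)ᴴ = Y := by
      rw [hes, Matrix.conjTranspose_mul, q1]
      calc _ = Q * (V * dg l * Vᴴ) * Q := by simp only [Matrix.mul_assoc]
        _ = (Q * Q⁻¹) * Y * (Q⁻¹ * Q) := by rw [← v4]; simp only [Matrix.mul_assoc]
        _ = Y := by rw [i1, i2, Matrix.one_mul, Matrix.mul_one]
    have hdv : dv v X Y = v s := by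
      rw [← hYe]
      exact dv_conj v hv_eq0 hv_smul hv_add hv_perm hX v1 s
    have hc := conv_line f hconv (Q * V) (hunit V v1) s
    have hsl := hc.le_slope_of_hasDerivAt (Set.mem_univ 0) (Set.mem_univ 1) zero_lt_one
      (hder V v1 s)
    rw [slope_def_field] at hsl
    simp only [one_mul, sub_zero, div_one] at hsl
    rw [hzero V v1 s, hYe, trace_conj] at hsl
    obtain ⟨w1, w2⟩ := mul_unit_facts u1 v1
    have hds := v_ds v hv_eq0 hv_smul hv_add hv_perm _ (unitary_ds _ w1 w2) s
    set m := (Matrix.of fun i j => Complex.normSq ((Uᴴ * V) i j)) *ᵥ s with hm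
    have hpair := vs_pair v vs hv_eq0 hv_smul hv_add hvs g (-m)
    have hneg : v (-m) = v m := by
      have := hv_smul (-1) m
      simpa using this
    simp only [Pi.neg_apply, mul_neg, Finset.sum_neg_distrib] at hpair
    rw [hneg] at hpair
    have hfin : max 0 (f X - f Y) ≤ vs g * v s := by
      apply max_le (mul_nonneg hvsn (hvn s))
      have := mul_le_mul_of_nonneg_left hds hvsn
      linarith
    rw [hdv]
    rcases (hvn s).eq_or_lt with h0 | h0
    · rw [← h0, div_zero]; exact hvsn
    · rwa [div_le_iff₀ h0]
  apply le_antisymm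
  · exact Real.sSup_le hub hvsn
  -- lower bound
  set C := sSup {r : ℝ | ∃ Y : Matrix (Fin n) (Fin n) ℂ, Y.PosDef ∧ Y ≠ X ∧
        r = max 0 (f X - f Y) / dv v X Y} with hC
  have hC0 : 0 ≤ C := by
    apply Real.sSup_nonneg
    rintro r ⟨Y, hY, -, rfl⟩
    apply div_nonneg (le_max_left _ _)
    rw [dv, vnorm]
    split_ifs
    · exact hvn _
    · exact le_rfl
  obtain ⟨y, hy1, hy2⟩ := (hvs g).1
  have hD := hder U u1 (-y)
  have htr : (Matrix.trace ((U * dg g * Uᴴ) * (U * dg (-y) * Uᴴ))).re = - vs g := by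
    rw [trace_conj, u2, hy2]
    have : (Matrix.of fun i j => Complex.normSq ((1 : Matrix (Fin n) (Fin n) ℂ) i j)) = 1 := by
      ext i j
      by_cases hij : i = j <;> simp [Matrix.one_apply, hij]
    rw [this, Matrix.one_mulVec]
    simp
  rw [htr] at hD
  have hslope := hD.tendsto_slope.mono_left
    (nhdsWithin_mono (0 : ℝ) (fun t (ht : t ∈ Set.Ioi (0 : ℝ)) => ne_of_gt ht))
  have hge : -C ≤ - vs g := by
    refine ge_of_tendsto hslope ?_
    filter_upwards [self_mem_nhdsWithin] with t ht
    have ht : 0 < t := ht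
    rw [slope_def_field, hzero U u1 (-y), sub_zero, le_div_iff₀ ht]
    set Y := Q * U * dg (fun i => Real.exp (t * (-y) i)) * (Q * U)ᴴ with hYdef
    by_cases hYX : Y = X
    · rw [hYX]
      nlinarith
    have hYp : Y.PosDef := conj_posDef _ (hunit U u1) _ (fun i => Real.exp_pos _)
    have hdv : dv v X Y = t * v y := by
      have := dv_conj v hv_eq0 hv_smul hv_add hv_perm hX u1 ((-t) • y)
      rw [hv_smul, abs_neg, abs_of_pos ht] at this
      rw [← this, hYdef]
      congr 4
      funext i
      simp
    have hle : max 0 (f X - f Y) / dv v X Y ≤ C := le_csSup ⟨_, hub⟩ ⟨Y, hYp, hYX, rfl⟩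
    have hy0 : 0 < v y := by
      rcases (hvn y).eq_or_lt with h0 | h0
      · exfalso
        apply hYX
        have := (hv_eq0 y).1 h0.symm
        rw [hYdef, this]
        simp only [Pi.neg_apply, Pi.zero_apply, neg_zero, mul_zero, Real.exp_zero, dg_one,
          Matrix.mul_one]
        exact hAA U u1
      · exact h0
    rw [hdv, div_le_iff₀ (mul_pos ht hy0)] at hle
    have h3 := le_max_right 0 (f X - f Y)
    have h4 : C * (t * v y) ≤ C * (t * 1) := by gcongr
    linarith
  linarith
end
end
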